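/- Let k be an algebraically closed field of characteristic 0. Let the group G = (k,+) × (k,+) act on the polynomial ring k[x₀,x₁,x₂,x₃] by k-algebra automorphisms where (s,t) acts by x₀ ↦ x₀, x₁ ↦ x₁ + s·x₀, x₂ ↦ x₂ + s·x₁ + (s²/2 + t)·x₀, x₃ ↦ x₃ + s·x₂ + (s²/2 + t)·x₁ + (s³/6 + s·t)·x₀. Then the ring of G-invariant polynomials equals the k-subalgebra generated by x₀ and f := x₁³ − 3·x₀·x₁·x₂ + 3·x₀²·x₃. -/

import Mathlib

open MvPolynomial

/-- For `(s,t) ∈ k × k`, the `k`-algebra automorphism of `k[x₀,x₁,x₂,x₃]` given by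
`x₀ ↦ x₀`, `x₁ ↦ x₁ + s·x₀`, `x₂ ↦ x₂ + s·x₁ + (s²/2 + t)·x₀`,
`x₃ ↦ x₃ + s·x₂ + (s²/2 + t)·x₁ + (s³/6 + s·t)·x₀`; these automorphisms define an action of
the group `(k,+) × (k,+)`. -/
noncomputable def g2Subst (k : Type*) [Field k] (s t : k) :
    MvPolynomial (Fin 4) k →ₐ[k] MvPolynomial (Fin 4) k :=
  MvPolynomial.aeval
    ![MvPolynomial.X 0,
      MvPolynomial.X 1 + MvPolynomial.C s * MvPolynomial.X 0,
      MvPolynomial.X 2 + MvPolynomial.C s * MvPolynomial.X 1 +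
        MvPolynomial.C (s ^ 2 / 2 + t) * MvPolynomial.X 0,
      MvPolynomial.X 3 + MvPolynomial.C s * MvPolynomial.X 2 +
        MvPolynomial.C (s ^ 2 / 2 + t) * MvPolynomial.X 1 +
        MvPolynomial.C (s ^ 3 / 6 + s * t) * MvPolynomial.X 0]

/-!
Every point with `x₀ ≠ 0` is moved by the group to `(x₀, 0, 0, F / (3x₀²))`, where `F` is the cubic
invariant: `s` kills the coordinate `x₁`, then `t` kills `x₂`, and the last coordinate is read off
from the invariance of `F`. Hence an invariant `f` is determined by `x₀` and `F` after division by
`x₀`, that is, `x₀ ^ n * f ∈ k[x₀, F]` for some `n`. The factor `x₀ ^ n` can be cancelled inside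
`k[x₀, F]`, because modulo `x₀` the cubic `F` becomes `x₁³`, which is still transcendental.
-/

section AdjoinPair

theorem exists_eq_mul_add_aeval_of_mem_adjoin_pair {R A : Type*} [CommSemiring R] [CommSemiring A]
    [Algebra R A] {x y p : A} (hp : p ∈ Algebra.adjoin R {x, y}) :
    ∃ q ∈ Algebra.adjoin R {x, y}, ∃ r : Polynomial R, p = x * q + Polynomial.aeval y r := by
  have aeval_mem (r : Polynomial R) : Polynomial.aeval y r ∈ Algebra.adjoin R {x, y} :=
    Algebra.adjoin_mono (by simp) (Polynomial.aeval_mem_adjoin_singleton R y)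
  induction hp using Algebra.adjoin_induction with
  | mem z hz =>
    obtain rfl | rfl := hz
    · exact ⟨1, one_mem _, 0, by simp⟩
    · exact ⟨0, zero_mem _, Polynomial.X, by simp⟩
  | algebraMap c => exact ⟨0, zero_mem _, Polynomial.C c, by simp⟩
  | add _ _ _ _ ih₁ ih₂ =>
    obtain ⟨q₁, hq₁, r₁, rfl⟩ := ih₁
    obtain ⟨q₂, hq₂, r₂, rfl⟩ := ih₂
    exact ⟨q₁ + q₂, add_mem hq₁ hq₂, r₁ + r₂, by rw [map_add]; ring⟩
  | mul _ _ _ hp₂ ih₁ ih₂ =>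
    obtain ⟨q₁, hq₁, r₁, rfl⟩ := ih₁
    obtain ⟨q₂, hq₂, r₂, rfl⟩ := ih₂
    exact ⟨q₁ * (x * q₂ + Polynomial.aeval y r₂) + Polynomial.aeval y r₁ * q₂,
      add_mem (mul_mem hq₁ hp₂) (mul_mem (aeval_mem r₁) hq₂), r₁ * r₂, by rw [map_mul]; ring⟩

variable {R A B : Type*} [CommRing R] [CommRing A] [Algebra R A] [Ring B] [Algebra R B]

theorem mem_adjoin_pair_of_mul_mem (φ : A →ₐ[R] B) {x y g : A} (hx : IsLeftRegular x)
    (hφx : φ x = 0) (hφy : Transcendental R (φ y)) (hg : x * g ∈ Algebra.adjoin R {x, y}) :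
    g ∈ Algebra.adjoin R {x, y} := by
  obtain ⟨q, hq, r, h⟩ := exists_eq_mul_add_aeval_of_mem_adjoin_pair hg
  have hr : Polynomial.aeval (φ y) r = 0 := by
    simpa [hφx, ← Polynomial.aeval_algHom_apply] using (congrArg φ h).symm
  rw [transcendental_iff.mp hφy r hr, map_zero, add_zero] at h
  rwa [hx h]

theorem mem_adjoin_pair_of_pow_mul_mem (φ : A →ₐ[R] B) {x y g : A} (hx : IsLeftRegular x)
    (hφx : φ x = 0) (hφy : Transcendental R (φ y)) (n : ℕ)
    (hg : x ^ n * g ∈ Algebra.adjoin R {x, y}) : g ∈ Algebra.adjoin R {x, y} := by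
  induction n with
  | zero => simpa using hg
  | succ n ih =>
    rw [pow_succ', mul_assoc] at hg
    exact ih (mem_adjoin_pair_of_mul_mem φ hx hφx hφy hg)

end AdjoinPair

section NonvanishingLocus

variable {σ k : Type*}

theorem eq_of_eval_eq_of_eval_ne_zero [CommRing k] [IsDomain k] [Infinite k]
    {d p q : MvPolynomial σ k} (hd : d ≠ 0) (h : ∀ x, eval x d ≠ 0 → eval x p = eval x q) :
    p = q := by
  refine mul_left_cancel₀ hd (MvPolynomial.funext fun x => ?_)
  rw [map_mul, map_mul]
  by_cases hx : eval x d = 0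
  · rw [hx, zero_mul, zero_mul]
  · rw [h x hx]

open scoped Pointwise in
theorem exists_pow_mul_mem_of_eval_eq_eval_div [Field k] [Infinite k]
    (S : Subalgebra k (MvPolynomial σ k)) {d f : MvPolynomial σ k} (hd : d ≠ 0) (hdS : d ∈ S)
    {a : σ → MvPolynomial σ k} (ha : ∀ i, a i ∈ S)
    (hf : ∀ x, eval x d ≠ 0 → eval x f = eval (fun i => eval x (a i) / eval x d) f) :
    ∃ n : ℕ, d ^ n * f ∈ S := by
  -- On the locus `d ≠ 0` the fractions `a i / d` are honest functions, and multiplication by `d`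
  -- sends them into the image of `S`; so some power of `d` sends `f` there.
  let restrict : MvPolynomial σ k →ₐ[k] ({x : σ → k // eval x d ≠ 0} → k) :=
    AlgHom.pi fun x => aeval x.1
  have restrict_apply (p x) : restrict p x = eval x.1 p := by
    simp [restrict, aeval_eq_eval]
  let b (i : σ) : {x : σ → k // eval x d ≠ 0} → k := fun x => eval x.1 (a i) / eval x.1 d
  have f_eq : restrict f = aeval b f := by
    funext x
    rw [restrict_apply, hf x.1 x.2, ← Pi.evalAlgHom_apply k _ x (aeval b f), comp_aeval_apply,
      aeval_eq_eval]
    rfl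
  have smul_subset : restrict d • Set.range b ⊆ S.map restrict := by
    rintro _ ⟨_, ⟨i, rfl⟩, rfl⟩
    refine ⟨a i, ha i, funext fun x => ?_⟩
    simp [restrict_apply, b, mul_div_cancel₀ _ x.2]
  have f_mem : restrict f ∈ Algebra.adjoin k (Set.range b) := by
    rw [f_eq, Algebra.adjoin_range_eq_range_aeval]
    exact ⟨f, rfl⟩
  obtain ⟨n, hn⟩ := Algebra.pow_smul_mem_of_smul_subset_of_mem_adjoin (restrict d) (Set.range b)
    (S.map restrict) smul_subset f_mem ⟨d, hdS, rfl⟩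
  obtain ⟨p, hpS, hp⟩ := hn n le_rfl
  refine ⟨n, ?_⟩
  suffices p = d ^ n * f from this ▸ hpS
  refine eq_of_eval_eq_of_eval_ne_zero hd fun x hx => ?_
  simpa [restrict_apply] using congrFun hp ⟨x, hx⟩

end NonvanishingLocus

theorem two_and_three_ne_zero_of_six_ne_zero {R : Type*} [Semiring R] (h6 : (6 : R) ≠ 0) :
    (2 : R) ≠ 0 ∧ (3 : R) ≠ 0 := by
  have h : (2 : R) * 3 ≠ 0 := by norm_num [h6]
  exact ⟨left_ne_zero_of_mul h, right_ne_zero_of_mul h⟩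

/-- The cubic invariant `F = x₁³ − 3x₀x₁x₂ + 3x₀²x₃` of the action `g2Subst`, which generates the
ring of invariants together with `x₀`. -/
noncomputable def g2Cubic (k : Type*) [CommRing k] : MvPolynomial (Fin 4) k :=
  X 1 ^ 3 - C 3 * X 0 * X 1 * X 2 + C 3 * X 0 ^ 2 * X 3

theorem mem_adjoin_g2Cubic_of_X_pow_mul_mem {k : Type*} [CommRing k]
    {f : MvPolynomial (Fin 4) k} {n : ℕ}
    (hf : X 0 ^ n * f ∈ Algebra.adjoin k {X 0, g2Cubic k}) :
    f ∈ Algebra.adjoin k {X 0, g2Cubic k} := by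
  let φ : MvPolynomial (Fin 4) k →ₐ[k] Polynomial k := aeval ![0, Polynomial.X, 0, 0]
  have map_cubic : φ (g2Cubic k) = Polynomial.X ^ 3 := by simp [φ, g2Cubic]
  refine mem_adjoin_pair_of_pow_mul_mem φ isRegular_X.left (by simp [φ]) ?_ n hf
  rw [map_cubic]
  exact (Polynomial.transcendental_X k).pow three_pos

section G2

variable {k : Type*} [Field k]

theorem g2Subst_g2Cubic (h6 : (6 : k) ≠ 0) (s t : k) :
    g2Subst k s t (g2Cubic k) = g2Cubic k := by
  obtain ⟨h2, -⟩ := two_and_three_ne_zero_of_six_ne_zero h6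
  have coeff_X_zero_pow_three : s ^ 3 - 3 * s * (s ^ 2 / 2 + t) + 3 * (s ^ 3 / 6 + s * t) = 0 := by
    field_simp
    ring
  have h := congrArg (C (σ := Fin 4)) coeff_X_zero_pow_three
  simp only [map_add, map_sub, map_mul, map_pow, map_zero, map_ofNat] at h
  simp only [g2Subst, g2Cubic, map_add, map_sub, map_mul, map_pow, map_ofNat, aeval_X,
    Matrix.cons_val]
  linear_combination X 0 ^ 3 * h

theorem g2Subst_eq_of_mem_adjoin_g2Cubic (h6 : (6 : k) ≠ 0) {f : MvPolynomial (Fin 4) k}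
    (hf : f ∈ Algebra.adjoin k {X 0, g2Cubic k}) (s t : k) : g2Subst k s t f = f := by
  have generators_fixed : Set.EqOn (g2Subst k s t) (AlgHom.id k _) {X 0, g2Cubic k} := by
    rintro _ (rfl | rfl)
    · simp [g2Subst]
    · exact g2Subst_g2Cubic h6 s t
  exact AlgHom.eqOn_adjoin_iff.mpr generators_fixed hf

theorem exists_eval_g2Subst_eq (h6 : (6 : k) ≠ 0) {x : Fin 4 → k} (hx : x 0 ≠ 0) :
    ∃ s t : k, ∀ f, eval x (g2Subst k s t f) =
      eval ![x 0, 0, 0, eval x (g2Cubic k) / (3 * x 0 ^ 2)] f := by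
  obtain ⟨h2, h3⟩ := two_and_three_ne_zero_of_six_ne_zero h6
  let s := -(x 1 / x 0)
  let t := (x 1 / x 0) ^ 2 / 2 - x 2 / x 0
  refine ⟨s, t, fun f => ?_⟩
  suffices (aeval x).comp (g2Subst k s t) =
      aeval ![x 0, 0, 0, eval x (g2Cubic k) / (3 * x 0 ^ 2)] from DFunLike.congr_fun this f
  refine algHom_ext fun i => ?_
  fin_cases i
  · simp [g2Subst]
  · simp [g2Subst, s, hx]
  · simp only [g2Subst, s, t, AlgHom.comp_apply, aeval_X, aeval_C, map_add, map_mul,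
      Algebra.algebraMap_self_apply, Matrix.cons_val, Fin.reduceFinMk]
    field_simp
    ring
  · simp only [g2Subst, g2Cubic, s, t, AlgHom.comp_apply, aeval_X, aeval_C, eval_X, eval_C,
      map_add, map_sub, map_mul, map_pow, Algebra.algebraMap_self_apply, Matrix.cons_val,
      Fin.reduceFinMk]
    field_simp
    ring

theorem exists_X_pow_mul_mem_adjoin_g2Cubic [Infinite k] (h6 : (6 : k) ≠ 0)
    {f : MvPolynomial (Fin 4) k} (hf : ∀ s t, g2Subst k s t f = f) :
    ∃ n : ℕ, X 0 ^ n * f ∈ Algebra.adjoin k {X 0, g2Cubic k} := by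
  obtain ⟨-, h3⟩ := two_and_three_ne_zero_of_six_ne_zero h6
  have X_mem : X 0 ∈ Algebra.adjoin k {X 0, g2Cubic k} := Algebra.subset_adjoin (by simp)
  have cubic_mem : g2Cubic k ∈ Algebra.adjoin k {X 0, g2Cubic k} :=
    Algebra.subset_adjoin (by simp)
  let a : Fin 4 → MvPolynomial (Fin 4) k := ![X 0 ^ 3, 0, 0, (3 : k)⁻¹ • g2Cubic k]
  have a_mem (i) : a i ∈ Algebra.adjoin k {X 0, g2Cubic k} := by
    fin_cases i
    exacts [pow_mem X_mem 3, zero_mem _, zero_mem _, Subalgebra.smul_mem _ cubic_mem _]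
  have eval_eq (x) (hx : eval x (X 0 ^ 2) ≠ 0) :
      eval x f = eval (fun i => eval x (a i) / eval x (X 0 ^ 2)) f := by
    have hx₀ : x 0 ≠ 0 := by simpa using hx
    obtain ⟨s, t, h⟩ := exists_eval_g2Subst_eq h6 hx₀
    rw [← hf s t, h, hf s t]
    congr 2
    funext i
    fin_cases i
    · simp only [a, map_pow, eval_X, Matrix.cons_val, Fin.reduceFinMk]
      field_simp
    · simp [a]
    · simp [a]
    · simp only [a, smul_eval, map_pow, eval_X, Matrix.cons_val, Fin.reduceFinMk]
      field_simp
  obtain ⟨n, hn⟩ := exists_pow_mul_mem_of_eval_eq_eval_div _ (pow_ne_zero 2 (X_ne_zero 0))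
    (pow_mem X_mem 2) a_mem eval_eq
  exact ⟨2 * n, by rwa [pow_mul]⟩

end G2

theorem g2_invariants_eq_adjoin_general {k : Type*} [Field k] [Infinite k] (h6 : (6 : k) ≠ 0)
    (f : MvPolynomial (Fin 4) k) :
    (∀ s t : k, g2Subst k s t f = f) ↔ f ∈ Algebra.adjoin k {X 0, g2Cubic k} := by
  refine ⟨fun hf => ?_, g2Subst_eq_of_mem_adjoin_g2Cubic h6⟩
  obtain ⟨n, hn⟩ := exists_X_pow_mul_mem_adjoin_g2Cubic h6 hf
  exact mem_adjoin_g2Cubic_of_X_pow_mul_mem hn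

/-- Let `k` be an algebraically closed field of characteristic `0`, and let
`G = (k,+) × (k,+)` act on `k[x₀,x₁,x₂,x₃]` by the automorphisms `g2Subst k s t`. Then the
ring of `G`-invariant polynomials equals the `k`-subalgebra generated by `x₀` and
`f = x₁³ − 3·x₀·x₁·x₂ + 3·x₀²·x₃`. -/
theorem g2_invariants_eq_adjoin
    (k : Type*) [Field k] [IsAlgClosed k] [CharZero k]
    (f : MvPolynomial (Fin 4) k) :
    (∀ s t : k, g2Subst k s t f = f) ↔
      f ∈ Algebra.adjoin k
        ({MvPolynomial.X 0,
          MvPolynomial.X 1 ^ 3 -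
            MvPolynomial.C 3 * MvPolynomial.X 0 * MvPolynomial.X 1 * MvPolynomial.X 2 +
            MvPolynomial.C 3 * MvPolynomial.X 0 ^ 2 * MvPolynomial.X 3} :
          Set (MvPolynomial (Fin 4) k)) :=
  g2_invariants_eq_adjoin_general (by norm_num) f
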